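/- arXiv:2411.15992 — 6 statements merged into one kernel-verified Lean document; each statement's English description precedes it below -/
import Mathlib

section
/- Let n ≥ 3 be an even natural number and let CL_n be the circular ladder graph on 2n vertices (the Cartesian product of the cycle C_n with a single edge). Then the number of proper 3-edge-colorings of CL_n equals 2^n + 8. -/
/-- The circular ladder graph `CL_n`: vertices `(ZMod n) × Bool`, with `(i,b)`
adjacent to `(j,c)` iff (`b = c` and (`j = i + 1` or `i = j + 1`)) or (`b ≠ c` and `i = j`). -/
def circularLadder (n : ℕ) : SimpleGraph (ZMod n × Bool) :=
  SimpleGraph.fromRel (fun p q =>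
    (p.2 = q.2 ∧ (q.1 = p.1 + 1 ∨ p.1 = q.1 + 1)) ∨ (p.2 ≠ q.2 ∧ p.1 = q.1))

/-- A Tait coloring (proper 3-edge-coloring): distinct edges sharing a vertex get
different colors in `ZMod 3`. -/
def IsTaitColoring {V : Type*} (G : SimpleGraph V) (C : G.edgeSet → ZMod 3) : Prop :=
  ∀ e₁ e₂ : G.edgeSet, e₁ ≠ e₂ →
    (∃ v : V, v ∈ (e₁ : Sym2 V) ∧ v ∈ (e₂ : Sym2 V)) → C e₁ ≠ C e₂

/-- The number of proper 3-edge-colorings of `G`. -/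
noncomputable def numTaitColorings {V : Type*} (G : SimpleGraph V) : ℕ :=
  Nat.card {C : G.edgeSet → ZMod 3 // IsTaitColoring G C}

namespace TaitAux

abbrev St := ZMod 3 × ZMod 3

def R (s t : St) : Prop := s.1 ≠ t.1 ∧ s.2 ≠ t.2 ∧ s.1 + t.1 = s.2 + t.2

instance : DecidableRel R := fun s t => by unfold R; infer_instance

def Pth (k : ℕ) (s t : St) : Finset (Fin (k+1) → St) :=
  Finset.univ.filter fun a => (∀ i : Fin k, R (a i.castSucc) (a i.succ)) ∧ a 0 = s ∧ a (Fin.last k) = t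

lemma card_Pth_succ (k : ℕ) (s t : St) :
    (Pth (k+1) s t).card = ∑ z : St, if R s z then (Pth k z t).card else 0 := by
  classical
  have h : Pth (k+1) s t =
      (Finset.univ.filter fun z => R s z).biUnion
        (fun z => (Pth k z t).image (fun a => (Fin.cons s a : Fin (k+2) → St))) := by
    ext a
    simp only [Pth, Finset.mem_filter, Finset.mem_univ, true_and, Finset.mem_biUnion,
      Finset.mem_image]
    constructor
    · rintro ⟨h1, h2, h3⟩
      refine ⟨a 1, ?_, Fin.tail a, ⟨?_, rfl, ?_⟩, ?_⟩
      · have := h1 0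
        rw [← h2]; simpa using this
      · intro i
        have := h1 i.succ
        simpa [Fin.tail] using this
      · simpa [Fin.tail] using h3
      · rw [← h2]; exact Fin.cons_self_tail a
    · rintro ⟨z, hz, a, ⟨h1, h2, h3⟩, rfl⟩
      refine ⟨?_, rfl, ?_⟩
      · intro i
        refine Fin.cases ?_ (fun i => ?_) i
        · simpa [h2] using hz
        · have := h1 i
          rw [← Fin.succ_castSucc]
          simpa using this
      · rw [← h3, ← Fin.succ_last]; simp
  rw [h, Finset.card_biUnion, ← Finset.sum_filter]
  · refine Finset.sum_congr rfl fun z _ => ?_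
    rw [Finset.card_image_of_injective]
    exact Fin.cons_right_injective (α := fun _ => St) s
  · intro z _ w _ hzw
    rw [Function.onFun, Finset.disjoint_left]
    intro x hx hy
    simp only [Pth, Finset.mem_filter, Finset.mem_univ, true_and, Finset.mem_image] at hx hy
    obtain ⟨a, ⟨_, ha, _⟩, rfl⟩ := hx
    obtain ⟨b, ⟨_, hb, _⟩, hab⟩ := hy
    have := Fin.cons_right_injective (α := fun _ => St) s hab
    exact hzw (by rw [← ha, ← hb, this])

def fA (s t : St) : ℤ := if s.1 = s.2 ∧ t.1 = t.2 then 2 else 0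
def fB (s t : St) : ℤ :=
  if s.1 = s.2 then (if t.1 = t.2 then (if s = t then 4 else -2) else 0)
  else if s = t then 3 else if s = t.swap then -3 else 0
def fC (s t : St) : ℤ :=
  if s.1 = s.2 then 0 else if s = t then 3 else if s = t.swap then 3 else 0

set_option maxRecDepth 100000 in
lemma recA : ∀ s t : St, (∑ z : St, if R s z then fA z t else 0) = 2 * fA s t := by decide
set_option maxRecDepth 100000 in
lemma recB : ∀ s t : St, (∑ z : St, if R s z then fB z t else 0) = - fB s t := by decide
set_option maxRecDepth 100000 in
lemma recC : ∀ s t : St, (∑ z : St, if R s z then fC z t else 0) = fC s t := by decide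
set_option maxRecDepth 100000 in
lemma base : ∀ s t : St, (if s = t then (6:ℤ) else 0) = fA s t + fB s t + fC s t := by decide
set_option maxRecDepth 100000 in
lemma totA : (∑ s : St, ∑ t : St, if R t s then fA s t else 0) = 12 := by decide
set_option maxRecDepth 100000 in
lemma totB : (∑ s : St, ∑ t : St, if R t s then fB s t else 0) = -30 := by decide
set_option maxRecDepth 100000 in
lemma totC : (∑ s : St, ∑ t : St, if R t s then fC s t else 0) = 18 := by decide

lemma card_Pth (k : ℕ) : ∀ s t : St,
    (6 * (Pth k s t).card : ℤ) = 2 ^ k * fA s t + (-1) ^ k * fB s t + fC s t := by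
  induction k with
  | zero =>
    intro s t
    have : (Pth 0 s t).card = if s = t then 1 else 0 := by
      split_ifs with h
      · subst h
        rw [Finset.card_eq_one]
        refine ⟨fun _ => s, ?_⟩
        ext a
        simp only [Pth, Finset.mem_filter, Finset.mem_univ, true_and, Finset.mem_singleton]
        constructor
        · rintro ⟨_, h, _⟩
          funext i
          rw [← h]; congr 1; exact Fin.ext (by have := i.2; simp)
        · rintro rfl
          exact ⟨fun i => i.elim0, rfl, rfl⟩
      · rw [Finset.card_eq_zero, Pth, Finset.filter_eq_empty_iff]
        rintro a _ ⟨_, h1, h2⟩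
        exact h (h1.symm.trans h2)
    have hb := base s t
    rw [this]
    split_ifs at * <;> simp <;> linarith
  | succ k ih =>
    intro s t
    rw [card_Pth_succ]
    have e : (6 * ((∑ z : St, if R s z then (Pth k z t).card else 0 : ℕ) : ℤ))
        = 2 ^ k * (∑ z : St, if R s z then fA z t else 0)
          + (-1) ^ k * (∑ z : St, if R s z then fB z t else 0)
          + (∑ z : St, if R s z then fC z t else 0) := by
      push_cast
      rw [Finset.mul_sum, Finset.mul_sum, Finset.mul_sum, ← Finset.sum_add_distrib,
        ← Finset.sum_add_distrib]
      refine Finset.sum_congr rfl fun z _ => ?_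
      split_ifs
      · exact ih z t
      · simp
    rw [e, recA, recB, recC]
    ring

lemma card_cyc (k : ℕ) (hk : Odd k) :
    Nat.card {g : Fin (k+1) → St // ∀ i, R (g i) (g (i+1))} = 2 ^ (k+1) + 8 := by
  classical
  rw [Nat.card_eq_fintype_card, Fintype.card_subtype]
  have h : (Finset.univ.filter fun g : Fin (k+1) → St => ∀ i, R (g i) (g (i+1)))
      = (Finset.univ.filter fun p : St × St => R p.2 p.1).biUnion (fun p => Pth k p.1 p.2) := by
    ext a
    simp only [Pth, Finset.mem_filter, Finset.mem_univ, true_and, Finset.mem_biUnion]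
    constructor
    · intro h
      refine ⟨(a 0, a (Fin.last k)), ?_, ?_, rfl, rfl⟩
      · simpa using h (Fin.last k)
      · intro i
        simpa using h i.castSucc
    · rintro ⟨⟨s, t⟩, h1, h2, rfl, rfl⟩ i
      refine Fin.lastCases ?_ (fun i => ?_) i
      · simpa using h1
      · simpa using h2 i
  rw [h, Finset.card_biUnion, Finset.sum_filter, Fintype.sum_prod_type]
  · have e : (6 * ((∑ s : St, ∑ t : St, if R t s then (Pth k s t).card else 0 : ℕ) : ℤ))
        = 2 ^ k * (∑ s : St, ∑ t : St, if R t s then fA s t else 0)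
          + (-1) ^ k * (∑ s : St, ∑ t : St, if R t s then fB s t else 0)
          + (∑ s : St, ∑ t : St, if R t s then fC s t else 0) := by
      push_cast
      simp only [Finset.mul_sum, ← Finset.sum_add_distrib]
      refine Finset.sum_congr rfl fun s _ => Finset.sum_congr rfl fun t _ => ?_
      split_ifs
      · exact card_Pth k s t
      · simp
    rw [totA, totB, totC, hk.neg_one_pow] at e
    zify
    push_cast at e
    rw [pow_succ]
    linarith
  · rintro ⟨s, t⟩ _ ⟨s', t'⟩ _ hne
    rw [Function.onFun, Finset.disjoint_left]
    intro x hx hy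
    simp only [Pth, Finset.mem_filter, Finset.mem_univ, true_and] at hx hy
    apply hne
    rw [← hx.2.1, ← hx.2.2, ← hy.2.1, ← hy.2.2]

section
variable {n : ℕ}

lemma adj_iff (p q : ZMod n × Bool) (h1 : (1 : ZMod n) ≠ 0) : (circularLadder n).Adj p q ↔
    (p.2 = q.2 ∧ (q.1 = p.1 + 1 ∨ p.1 = q.1 + 1)) ∨ (p.2 ≠ q.2 ∧ p.1 = q.1) := by
  unfold circularLadder
  rw [SimpleGraph.fromRel_adj]
  obtain ⟨i, b⟩ := p
  obtain ⟨j, c⟩ := q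
  simp only [ne_eq, Prod.mk.injEq]
  constructor
  · rintro ⟨_, h | h⟩
    · exact h
    · rcases h with ⟨h, h'⟩ | ⟨h, h'⟩
      · exact Or.inl ⟨h.symm, h'.symm⟩
      · exact Or.inr ⟨fun e => h e.symm, h'.symm⟩
  · intro h
    refine ⟨?_, Or.inl h⟩
    rintro ⟨rfl, rfl⟩
    simp [h1] at h

def rawE (x : ZMod n × Option Bool) : Sym2 (ZMod n × Bool) :=
  match x with
  | (i, some b) => s((i, b), (i+1, b))
  | (i, none) => s((i, false), (i, true))

lemma rawE_mem (h1 : (1 : ZMod n) ≠ 0) (x : ZMod n × Option Bool) :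
    rawE x ∈ (circularLadder n).edgeSet := by
  obtain ⟨i, _ | b⟩ := x <;> simp [rawE, adj_iff _ _ h1]

lemma rawE_inj (h1 : (1 : ZMod n) ≠ 0) (h2 : (1 + 1 : ZMod n) ≠ 0) :
    Function.Injective (rawE (n := n)) := by
  rintro ⟨i, _ | b⟩ ⟨j, _ | c⟩ h <;> simp [rawE] at h
  · simp [h]
  · grind
  · grind
  · rcases h with h | ⟨⟨h, h'⟩, h3, _⟩
    · simp [h]
    · exfalso
      apply h2
      rw [h] at h3
      have : j + (1 + 1) = j + 0 := by rw [← add_assoc, h3, add_zero]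
      exact add_left_cancel this

lemma rawE_surj (h1 : (1 : ZMod n) ≠ 0) (e) (he : e ∈ (circularLadder n).edgeSet) :
    ∃ x, rawE x = e := by
  induction e with
  | _ p q =>
    rw [SimpleGraph.mem_edgeSet, adj_iff _ _ h1] at he
    obtain ⟨i, b⟩ := p
    obtain ⟨j, c⟩ := q
    simp only at he
    rcases he with ⟨rfl, rfl | rfl⟩ | ⟨h, rfl⟩
    · exact ⟨(i, some b), rfl⟩
    · exact ⟨(j, some b), Sym2.eq_swap⟩
    · refine ⟨(i, none), ?_⟩
      cases b <;> cases c <;> simp_all [rawE]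

lemma mem_rawE (i : ZMod n) (b : Bool) (x : ZMod n × Option Bool) :
    (i, b) ∈ rawE x ↔ x = (i, some b) ∨ x = (i - 1, some b) ∨ x = (i, none) := by
  obtain ⟨j, _ | c⟩ := x
  · simp only [rawE, Sym2.mem_iff, Prod.mk.injEq]
    cases b <;> simp [eq_comm]
  · simp only [rawE, Sym2.mem_iff, Prod.mk.injEq, eq_sub_iff_add_eq]
    simp [eq_comm]

noncomputable def EE (h1 : (1 : ZMod n) ≠ 0) (h2 : (1 + 1 : ZMod n) ≠ 0) :
    ZMod n × Option Bool ≃ (circularLadder n).edgeSet :=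
  Equiv.ofBijective (fun x => ⟨rawE x, rawE_mem h1 x⟩)
    ⟨fun x y h => rawE_inj h1 h2 (Subtype.ext_iff.1 h),
     fun e => by obtain ⟨x, hx⟩ := rawE_surj h1 e.1 e.2; exact ⟨x, Subtype.ext hx⟩⟩

def Good (c : ZMod n × Option Bool → ZMod 3) : Prop :=
  ∀ i b, c (i, some b) ≠ c (i+1, some b) ∧ c (i, some b) ≠ c (i+1, none) ∧
    c (i+1, some b) ≠ c (i+1, none)

lemma tait_iff (h1 : (1 : ZMod n) ≠ 0) (h2 : (1 + 1 : ZMod n) ≠ 0)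
    (C : (circularLadder n).edgeSet → ZMod 3) :
    IsTaitColoring _ C ↔ Good (C ∘ EE h1 h2) := by
  constructor
  · intro h i b
    have key : ∀ x y, x ≠ y → (i+1, b) ∈ rawE x → (i+1, b) ∈ rawE y →
        (C ∘ EE h1 h2) x ≠ (C ∘ EE h1 h2) y := by
      intro x y hxy hx hy
      exact h _ _ (fun e => hxy ((EE h1 h2).injective e)) ⟨(i+1, b), hx, hy⟩
    refine ⟨key _ _ ?_ ?_ ?_, key _ _ ?_ ?_ ?_, key _ _ ?_ ?_ ?_⟩ <;> simp [mem_rawE, h1]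
  · rintro h e₁ e₂ hne ⟨⟨i, b⟩, hv1, hv2⟩
    obtain ⟨x, rfl⟩ := (EE h1 h2).surjective e₁
    obtain ⟨y, rfl⟩ := (EE h1 h2).surjective e₂
    have hxy : x ≠ y := fun e => hne (by rw [e])
    change (i, b) ∈ rawE x at hv1
    change (i, b) ∈ rawE y at hv2
    rw [mem_rawE] at hv1 hv2
    have := h (i - 1) b
    simp only [sub_add_cancel, Function.comp] at this
    obtain ⟨ha, hb, hc⟩ := this
    rcases hv1 with rfl | rfl | rfl <;> rcases hv2 with rfl | rfl | rfl <;>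
      first
      | exact absurd rfl hxy
      | assumption
      | (apply Ne.symm; assumption)

lemma z3 : ∀ x y z : ZMod 3, x ≠ y → x ≠ z → y ≠ z → z = -(x + y) := by decide
lemma z3' : ∀ x y : ZMod 3, x ≠ y → x ≠ -(x + y) ∧ y ≠ -(x + y) := by decide

def goodEquiv : {c : ZMod n × Option Bool → ZMod 3 // Good c} ≃
    {g : ZMod n → St // ∀ i, R (g i) (g (i+1))} where
  toFun c := ⟨fun i => (c.1 (i, some false), c.1 (i, some true)), fun i => by
    obtain ⟨a1, a2, a3⟩ := c.2 i false
    obtain ⟨b1, b2, b3⟩ := c.2 i true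
    refine ⟨a1, b1, ?_⟩
    have ha := z3 _ _ _ a1 a2 a3
    have hb := z3 _ _ _ b1 b2 b3
    exact neg_injective (ha.symm.trans hb)⟩
  invFun g := ⟨fun x => match x with
    | (i, some false) => (g.1 i).1
    | (i, some true) => (g.1 i).2
    | (i, none) => -((g.1 (i-1)).1 + (g.1 i).1), fun i b => by
      obtain ⟨h1, h2, h3⟩ := g.2 i
      cases b
      · simp only [add_sub_cancel_right]
        exact ⟨h1, z3' _ _ h1⟩
      · simp only [add_sub_cancel_right]
        rw [h3]
        exact ⟨h2, z3' _ _ h2⟩⟩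
  left_inv c := by
    apply Subtype.ext
    funext ⟨i, b⟩
    match b with
    | some false => rfl
    | some true => rfl
    | none =>
      obtain ⟨a1, a2, a3⟩ := c.2 (i-1) false
      have := z3 _ _ _ a1 a2 a3
      rw [sub_add_cancel] at this
      exact this.symm
  right_inv g := rfl

end

end TaitAux

/-- For even `n ≥ 3`, the circular ladder graph `CL_n` has exactly `2 ^ n + 8`
proper 3-edge-colorings. -/
theorem numTaitColorings_circularLadder_even (n : ℕ) (hn : 3 ≤ n) (hpar : Even n) :
    numTaitColorings (circularLadder n) = 2 ^ n + 8 := by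
  obtain ⟨k, rfl⟩ : ∃ k, n = k + 1 := ⟨n - 1, by omega⟩
  have h1 : (1 : ZMod (k+1)) ≠ 0 := by
    intro h
    have := (ZMod.natCast_eq_zero_iff 1 (k+1)).1 (by simpa using h)
    have := Nat.le_of_dvd (by norm_num) this
    omega
  have h2 : (1 + 1 : ZMod (k+1)) ≠ 0 := by
    intro h
    have := (ZMod.natCast_eq_zero_iff (1+1) (k+1)).1 (by rw [Nat.cast_add, Nat.cast_one]; exact h)
    have := Nat.le_of_dvd (by norm_num) this
    omega
  have hk : Odd k := by
    rw [← Nat.not_even_iff_odd]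
    exact Nat.even_add_one.1 hpar
  rw [numTaitColorings, ← TaitAux.card_cyc k hk]
  refine Nat.card_congr (Equiv.trans ?_ (TaitAux.goodEquiv (n := k + 1)))
  refine Equiv.subtypeEquiv (Equiv.arrowCongr (TaitAux.EE h1 h2).symm (Equiv.refl _)) ?_
  intro C
  exact TaitAux.tait_iff h1 h2 C
end

section
/- Let n ≥ 3 be an odd natural number and let CL_n be the circular ladder graph on 2n vertices. Then the number of proper 3-edge-colorings of CL_n equals 2^n − 2. -/
namespace CLproof

/-- paths -/
def W (k : ℕ) (a b : ZMod 3) : ℤ :=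
  ∑ f : Fin (k+1) → ZMod 3,
    if f 0 = a ∧ f (Fin.last k) = b ∧ (∀ i : Fin k, f i.castSucc ≠ f i.succ) then 1 else 0

lemma W_zero (a b : ZMod 3) : W 0 a b = if a = b then 1 else 0 := by
  revert a b; unfold W; decide

lemma W_succ (k : ℕ) (a b : ZMod 3) :
    W (k+1) a b = ∑ c : ZMod 3, if a ≠ c then W k c b else 0 := by
  unfold W
  rw [← (Fin.consEquiv (fun _ : Fin (k+2) => ZMod 3)).sum_comp, Fintype.sum_prod_type]
  simp only [Fin.consEquiv_apply]
  have h1 : ∀ (c : ZMod 3) (f : Fin (k+1) → ZMod 3),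
      ((Fin.cons c f : Fin (k+2) → ZMod 3) 0 = a ∧
        (Fin.cons c f : Fin (k+2) → ZMod 3) (Fin.last (k+1)) = b ∧
        (∀ i : Fin (k+1), (Fin.cons c f : Fin (k+2) → ZMod 3) i.castSucc ≠
          (Fin.cons c f : Fin (k+2) → ZMod 3) i.succ)) ↔
      (c = a ∧ a ≠ f 0 ∧ f (Fin.last k) = b ∧ (∀ i : Fin k, f i.castSucc ≠ f i.succ)) := by
    intro c f
    rw [← Fin.succ_last, Fin.forall_fin_succ]
    simp only [Fin.cons_zero, Fin.cons_succ, Fin.castSucc_zero, ← Fin.succ_castSucc]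
    constructor
    · rintro ⟨rfl, h2, h3, h4⟩; exact ⟨rfl, h3, h2, h4⟩
    · rintro ⟨rfl, h2, h3, h4⟩; exact ⟨rfl, h3, h2, h4⟩
  simp_rw [h1]
  rw [Finset.sum_comm]
  have h2 : ∀ c : ZMod 3, (if a ≠ c then ∑ f : Fin (k+1) → ZMod 3,
    (if f 0 = c ∧ f (Fin.last k) = b ∧ (∀ i : Fin k, f i.castSucc ≠ f i.succ) then (1:ℤ) else 0) else 0)
    = ∑ f : Fin (k+1) → ZMod 3,
    (if f 0 = c ∧ a ≠ f 0 ∧ f (Fin.last k) = b ∧ (∀ i : Fin k, f i.castSucc ≠ f i.succ) then (1:ℤ) else 0) := by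
    intro c
    split_ifs with h
    · apply Finset.sum_congr rfl
      intro f _
      congr 1
      apply propext
      constructor
      · rintro ⟨rfl, h2⟩; exact ⟨rfl, h, h2⟩
      · rintro ⟨rfl, _, h2⟩; exact ⟨rfl, h2⟩
    · symm
      apply Finset.sum_eq_zero
      intro f _
      rw [if_neg]
      rintro ⟨rfl, h3, _⟩; exact h h3
  simp_rw [h2]
  rw [Finset.sum_comm (s := (Finset.univ : Finset (ZMod 3)))]
  apply Finset.sum_congr rfl
  intro f _
  simp only [ite_and]
  rw [Finset.sum_ite_eq', Finset.sum_ite_eq]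
  simp

lemma W_formula (k : ℕ) : ∀ (a b : ZMod 3),
    3 * W k a b = 2^k + (-1)^k * (if a = b then 2 else -1) := by
  induction k with
  | zero => intro a b; rw [W_zero]; split_ifs <;> norm_num
  | succ k ih =>
    intro a b
    rw [W_succ, Finset.mul_sum]
    simp_rw [mul_ite, mul_zero, ih]
    have : ∀ F : ZMod 3 → ℤ, ∑ c, F c = F 0 + F 1 + F 2 := fun F => Fin.sum_univ_three F
    rw [this]
    have h01 : (0 : ZMod 3) ≠ 1 := by decide
    have h02 : (0 : ZMod 3) ≠ 2 := by decide
    have h12 : (1 : ZMod 3) ≠ 2 := by decide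
    have hc : ∀ c : ZMod 3, c = 0 ∨ c = 1 ∨ c = 2 := by decide
    rcases hc a with rfl | rfl | rfl <;> rcases hc b with rfl | rfl | rfl <;>
      simp [h01, h02, h12, h01.symm, h02.symm, h12.symm] <;> ring

lemma cyc_count (m : ℕ) (hm : Even m) :
    Nat.card {x : Fin (m+1) → ZMod 3 // ∀ i, x i ≠ x (i+1)} = 2^(m+1) - 2 := by
  have key : (Nat.card {x : Fin (m+1) → ZMod 3 // ∀ i, x i ≠ x (i+1)} : ℤ)
      = ∑ a : ZMod 3, ∑ b : ZMod 3, if a ≠ b then W m a b else 0 := by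
    rw [Nat.card_eq_fintype_card, Fintype.card_subtype, Finset.card_filter]
    push_cast
    have h2 : ∀ a b : ZMod 3, (if a ≠ b then W m a b else 0) =
      ∑ f : Fin (m+1) → ZMod 3, if f 0 = a then (if f (Fin.last m) = b then
        (if f 0 ≠ f (Fin.last m) ∧ (∀ i : Fin m, f i.castSucc ≠ f i.succ) then (1:ℤ) else 0) else 0) else 0 := by
      intro a b
      unfold W
      split_ifs with h
      · apply Finset.sum_congr rfl
        intro f _
        simp only [← ite_and]
        congr 1
        apply propext
        constructor
        · rintro ⟨rfl, rfl, h2⟩; exact ⟨rfl, rfl, h, h2⟩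
        · rintro ⟨rfl, rfl, _, h2⟩; exact ⟨rfl, rfl, h2⟩
      · symm
        apply Finset.sum_eq_zero
        intro f _
        simp only [← ite_and]
        rw [if_neg]
        rintro ⟨rfl, rfl, h3, _⟩; exact h h3
    simp_rw [h2]
    simp_rw [Finset.sum_comm (s := (Finset.univ : Finset (ZMod 3)))
      (t := (Finset.univ : Finset (Fin (m+1) → ZMod 3)))]
    apply Finset.sum_congr rfl
    intro f _
    simp only [Finset.sum_ite_irrel, Finset.sum_ite_eq, Finset.mem_univ, if_true,
      Finset.sum_const_zero]
    congr 1
    apply propext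
    rw [Fin.forall_fin_succ']
    simp only [Fin.coeSucc_eq_succ, Fin.last_add_one]
    constructor
    · rintro ⟨h1, h2⟩; exact ⟨h2.symm, h1⟩
    · rintro ⟨h1, h2⟩; exact ⟨h2, h1.symm⟩
  have h3 : 3 * (Nat.card {x : Fin (m+1) → ZMod 3 // ∀ i, x i ≠ x (i+1)} : ℤ) = 3 * (2^(m+1) - 2) := by
    rw [key]
    simp_rw [Finset.mul_sum, mul_ite, mul_zero, W_formula, hm.neg_one_pow]
    have : ∀ F : ZMod 3 → ℤ, ∑ c, F c = F 0 + F 1 + F 2 := fun F => Fin.sum_univ_three F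
    simp_rw [this]
    have h01 : (0 : ZMod 3) ≠ 1 := by decide
    have h02 : (0 : ZMod 3) ≠ 2 := by decide
    have h12 : (1 : ZMod 3) ≠ 2 := by decide
    simp [h01, h02, h12, h01.symm, h02.symm, h12.symm]
    ring
  have h4 : 2 ≤ 2^(m+1) := by rw [pow_succ]; have := Nat.one_le_two_pow (n := m); omega
  zify [h4]
  linarith

/-- edge encoding -/
def enc0 (n : ℕ) : ZMod n × Option Bool → Sym2 (ZMod n × Bool)
  | (i, none) => s((i, false), (i, true))
  | (i, some b) => s((i, b), (i+1, b))

lemma mem_enc0 (n : ℕ) (i : ZMod n) (b : Bool) (k : ZMod n × Option Bool) :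
    (i, b) ∈ enc0 n k ↔ k = (i, none) ∨ k = (i, some b) ∨ k = (i-1, some b) := by
  obtain ⟨j, _ | c⟩ := k
  · simp only [enc0, Sym2.mem_iff, Prod.mk.injEq]
    cases b <;> simp [eq_comm]
  · simp only [enc0, Sym2.mem_iff, Prod.mk.injEq, Option.some.injEq, eq_sub_iff_add_eq]
    simp [eq_comm]

lemma enc0_mem (n : ℕ) (hn : 3 ≤ n) (k : ZMod n × Option Bool) :
    enc0 n k ∈ (circularLadder n).edgeSet := by
  have : Fact (1 < n) := ⟨by omega⟩
  obtain ⟨j, _ | c⟩ := k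
  · simp [enc0, circularLadder]
  · simp [enc0, circularLadder]

lemma enc0_inj (n : ℕ) (hn : 3 ≤ n) : Function.Injective (enc0 n) := by
  have : Fact (1 < n) := ⟨by omega⟩
  have h2 : (2 : ZMod n) ≠ 0 := by
    intro h
    have : ((2:ℕ) : ZMod n) = 0 := by exact_mod_cast h
    rw [ZMod.natCast_eq_zero_iff] at this
    have := Nat.le_of_dvd (by norm_num) this
    omega
  rintro ⟨i, _ | b⟩ ⟨j, _ | c⟩ h
  · simp [enc0] at h; simp [h]
  · simp only [enc0, Sym2.eq_iff, Prod.mk.injEq] at h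
    exfalso; cases c <;> simp at h
  · simp only [enc0, Sym2.eq_iff, Prod.mk.injEq] at h
    exfalso; cases b <;> simp at h
  · simp only [enc0, Sym2.eq_iff, Prod.mk.injEq] at h
    rcases h with ⟨⟨h, h'⟩, _⟩ | ⟨⟨h, _⟩, h', _⟩
    · simp [h, h']
    · exfalso; apply h2
      linear_combination h' - h

lemma enc0_surj (n : ℕ) (e) (he : e ∈ (circularLadder n).edgeSet) : ∃ k, enc0 n k = e := by
  induction e using Sym2.ind with
  | _ p q =>
  obtain ⟨i, b⟩ := p
  obtain ⟨j, c⟩ := q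
  simp only [SimpleGraph.mem_edgeSet, circularLadder, SimpleGraph.fromRel_adj] at he
  have : (b = c ∧ (j = i+1 ∨ i = j+1)) ∨ (b ≠ c ∧ i = j) := by
    have := he.2
    tauto
  rcases this with ⟨rfl, rfl | rfl⟩ | ⟨h, rfl⟩
  · exact ⟨(i, some b), rfl⟩
  · exact ⟨(j, some b), Sym2.eq_swap⟩
  · refine ⟨(i, none), ?_⟩
    cases b <;> cases c <;> simp [enc0, Sym2.eq_swap] at h ⊢

/-- encoding as an equivalence -/
noncomputable def enc (n : ℕ) (hn : 3 ≤ n) :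
    ZMod n × Option Bool ≃ (circularLadder n).edgeSet :=
  Equiv.ofBijective (fun k => ⟨enc0 n k, enc0_mem n hn k⟩)
    ⟨fun a b h => enc0_inj n hn (by simpa using h),
     fun ⟨e, he⟩ => by obtain ⟨k, hk⟩ := enc0_surj n e he; exact ⟨k, by simpa using hk⟩⟩

/-- local condition -/
def Loc (n : ℕ) (g : ZMod n × Option Bool → ZMod 3) : Prop :=
  ∀ i b, g (i, none) ≠ g (i, some b) ∧ g (i, none) ≠ g (i-1, some b) ∧
    g (i, some b) ≠ g (i-1, some b)

lemma tait_iff (n : ℕ) (hn : 3 ≤ n) (C : (circularLadder n).edgeSet → ZMod 3) :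
    IsTaitColoring _ C ↔ Loc n (C ∘ enc n hn) := by
  have : Fact (1 < n) := ⟨by omega⟩
  constructor
  · intro h i b
    have hh : ∀ k₁ k₂, k₁ ≠ k₂ → (i, b) ∈ enc0 n k₁ → (i, b) ∈ enc0 n k₂ →
        C (enc n hn k₁) ≠ C (enc n hn k₂) := fun k₁ k₂ hk h1 h2 =>
      h _ _ (fun hc => hk ((enc n hn).injective hc)) ⟨(i,b), h1, h2⟩
    refine ⟨hh _ _ ?_ ?_ ?_, hh _ _ ?_ ?_ ?_, hh _ _ ?_ ?_ ?_⟩ <;> simp [mem_enc0]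
    intro hc
    exact one_ne_zero (α := ZMod n) (by linear_combination hc)
  · intro h e₁ e₂ hne ⟨⟨i, b⟩, h1, h2⟩
    obtain ⟨k₁, rfl⟩ := (enc n hn).surjective e₁
    obtain ⟨k₂, rfl⟩ := (enc n hn).surjective e₂
    obtain ⟨a1, a2, a3⟩ := h i b
    simp only [Function.comp] at a1 a2 a3
    replace h1 := (mem_enc0 n i b k₁).1 h1
    replace h2 := (mem_enc0 n i b k₂).1 h2
    rcases h1 with rfl | rfl | rfl <;> rcases h2 with rfl | rfl | rfl <;>
      first
      | exact absurd rfl hne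
      | assumption
      | (apply Ne.symm; assumption)

lemma loc_eq (n : ℕ) (hpar : Odd n) (g) (h : Loc n g) (i : ZMod n) :
    g (i, some true) = g (i, some false) := by
  by_contra hne
  have dec : ∀ r x y x' y' : ZMod 3, x ≠ y → r ≠ x → r ≠ y → r ≠ x' → r ≠ y' → x' ≠ x → y' ≠ y →
    x' = y ∧ y' = x := by decide
  have step : ∀ j, g (j, some true) ≠ g (j, some false) →
      g (j+1, some true) = g (j, some false) ∧ g (j+1, some false) = g (j, some true) := by
    intro j hj
    obtain ⟨a1, a2, a3⟩ := h (j+1) true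
    obtain ⟨b1, b2, b3⟩ := h (j+1) false
    rw [add_sub_cancel_right] at a2 a3 b2 b3
    exact dec _ _ _ _ _ hj a2 b2 a1 b1 a3 b3
  have two : ∀ k : ℕ, g (i + (2*k : ℕ), some true) = g (i, some true) ∧
      g (i + (2*k : ℕ), some false) = g (i, some false) := by
    intro k
    induction k with
    | zero => simp
    | succ k ih =>
      have s1 := step (i + (2*k:ℕ)) (by rw [ih.1, ih.2]; exact hne)
      have s2 := step (i + (2*k:ℕ) + 1) (by rw [s1.1, s1.2, ih.1, ih.2]; exact Ne.symm hne)
      have e : i + ((2*(k+1) : ℕ) : ZMod n) = i + (2*k:ℕ) + 1 + 1 := by push_cast; ring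
      rw [e, s2.1, s2.2, s1.1, s1.2]; exact ih
  obtain ⟨k, hk⟩ := hpar
  have s := step (i + (2*k:ℕ)) (by rw [(two k).1, (two k).2]; exact hne)
  have e : i + ((2*k : ℕ) : ZMod n) + 1 = i := by
    have : ((2*k+1 : ℕ) : ZMod n) = 0 := by rw [← hk]; simp
    push_cast at this ⊢
    linear_combination this
  rw [e, (two k).2] at s
  exact hne s.1

/-- the reduction to cycle colorings -/
def locEquiv (n : ℕ) (hpar : Odd n) :
    {g // Loc n g} ≃ {x : ZMod n → ZMod 3 // ∀ i, x i ≠ x (i+1)} where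
  toFun g := ⟨fun i => g.1 (i, some true), fun i => by
    have := (g.2 (i+1) true).2.2
    rw [add_sub_cancel_right] at this
    exact this.symm⟩
  invFun x := ⟨fun k => match k with
    | (i, none) => -(x.1 i + x.1 (i-1))
    | (i, some _) => x.1 i, fun i b => by
      have := x.2 (i-1)
      rw [sub_add_cancel] at this
      have dec : ∀ u v : ZMod 3, u ≠ v → -(v+u) ≠ v ∧ -(v+u) ≠ u ∧ v ≠ u := by decide
      exact dec _ _ this⟩
  left_inv g := by
    apply Subtype.ext
    funext ⟨i, o⟩
    have dec : ∀ r u v : ZMod 3, r ≠ v → r ≠ u → v ≠ u → -(v+u) = r := by decide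
    obtain ⟨a1, a2, a3⟩ := g.2 i true
    rcases o with _ | _ | _
    · exact dec _ _ _ a1 a2 a3
    · exact loc_eq n hpar g.1 g.2 i
    · rfl
  right_inv x := rfl

end CLproof

/-- For odd `n ≥ 3`, the circular ladder graph `CL_n` has exactly `2 ^ n - 2`
proper 3-edge-colorings. -/
theorem numTaitColorings_circularLadder_odd (n : ℕ) (hn : 3 ≤ n) (hpar : Odd n) :
    numTaitColorings (circularLadder n) = 2 ^ n - 2 := by
  obtain ⟨m, rfl⟩ : ∃ m, n = m + 1 := ⟨n - 1, by omega⟩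
  have hm : Even m := by
    rcases Nat.even_or_odd m with h | h
    · exact h
    · exact absurd hpar (Nat.not_odd_iff_even.2 h.add_one)
  unfold numTaitColorings
  have e1 : {C : (circularLadder (m+1)).edgeSet → ZMod 3 // IsTaitColoring _ C} ≃
      {g // CLproof.Loc (m+1) g} :=
    Equiv.subtypeEquiv (Equiv.arrowCongr (CLproof.enc (m+1) hn).symm (Equiv.refl _)) (fun C => by
      rw [CLproof.tait_iff (m+1) hn]; rfl)
  rw [Nat.card_congr (e1.trans (CLproof.locEquiv (m+1) hpar))]
  exact CLproof.cyc_count m hm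
end

section
/- Let n ≥ 1 be an even natural number. The number of sequences (x_1, …, x_n) with each x_i ∈ {1, 2} ⊆ ZMod 3 and x_1 + ⋯ + x_n = 0 in ZMod 3 equals (2^n + 2)/3; equivalently, 3 times this number equals 2^n + 2. -/
def SeqSum (n : ℕ) (s : ZMod 3) : Type :=
  {x : Fin n → ZMod 3 // (∀ i, x i = 1 ∨ x i = 2) ∧ ∑ i, x i = s}

instance (n : ℕ) (s : ZMod 3) : Finite (SeqSum n s) := by
  unfold SeqSum; infer_instance

def seqMap (n : ℕ) (s : ZMod 3) : SeqSum n (s - 1) ⊕ SeqSum n (s - 2) → SeqSum (n + 1) s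
  | Sum.inl x => ⟨Fin.cons 1 x.1, by
      refine ⟨fun i => ?_, ?_⟩
      · refine Fin.cases ?_ (fun j => ?_) i
        · simp
        · simpa using x.2.1 j
      · rw [Fin.sum_univ_succ]; simp [x.2.2]⟩
  | Sum.inr x => ⟨Fin.cons 2 x.1, by
      refine ⟨fun i => ?_, ?_⟩
      · refine Fin.cases ?_ (fun j => ?_) i
        · simp
        · simpa using x.2.1 j
      · rw [Fin.sum_univ_succ]; simp [x.2.2]⟩

theorem seqMap_bij (n : ℕ) (s : ZMod 3) : Function.Bijective (seqMap n s) := by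
  have h12 : (1 : ZMod 3) ≠ 2 := by decide
  constructor
  · rintro (x | x) (y | y) h <;> have h' := congrArg Subtype.val h <;>
      simp only [seqMap, Fin.cons_inj] at h'
    · exact congrArg Sum.inl (Subtype.ext h'.2)
    · exact absurd h'.1 h12
    · exact absurd h'.1.symm h12
    · exact congrArg Sum.inr (Subtype.ext h'.2)
  · rintro ⟨x, hx, hs⟩
    rw [Fin.sum_univ_succ] at hs
    rcases hx 0 with h | h
    · refine ⟨Sum.inl ⟨Fin.tail x, fun i => hx i.succ, ?_⟩, Subtype.ext ?_⟩
      · rw [← hs, h]; simp [Fin.tail]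
      · simp only [seqMap]; rw [← h]; exact Fin.cons_self_tail x
    · refine ⟨Sum.inr ⟨Fin.tail x, fun i => hx i.succ, ?_⟩, Subtype.ext ?_⟩
      · rw [← hs, h]; simp [Fin.tail]
      · simp only [seqMap]; rw [← h]; exact Fin.cons_self_tail x

theorem seq_rec (n : ℕ) (s : ZMod 3) : Nat.card (SeqSum (n + 1) s) =
    Nat.card (SeqSum n (s - 1)) + Nat.card (SeqSum n (s - 2)) := by
  rw [← Nat.card_sum]
  exact (Nat.card_congr (Equiv.ofBijective _ (seqMap_bij n s))).symm

theorem seq_main (k : ℕ) : 3 * Nat.card (SeqSum (k + k) 0) = 2 ^ (k + k) + 2 ∧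
    3 * Nat.card (SeqSum (k + k) 1) + 1 = 2 ^ (k + k) ∧
    3 * Nat.card (SeqSum (k + k) 2) + 1 = 2 ^ (k + k) := by
  induction k with
  | zero =>
    have h0 : Nat.card (SeqSum 0 0) = 1 := by
      rw [Nat.card_eq_one_iff_unique]
      exact ⟨⟨fun a b => Subtype.ext (Subsingleton.elim _ _)⟩,
        ⟨⟨Fin.elim0, fun i => i.elim0, by simp⟩⟩⟩
    have h1 : ∀ s : ZMod 3, s ≠ 0 → Nat.card (SeqSum 0 s) = 0 := by
      intro s hs
      have : IsEmpty (SeqSum 0 s) := ⟨fun x => hs (by simpa using x.2.2.symm)⟩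
      exact Nat.card_of_isEmpty
    simp [h0, h1 1 (by decide), h1 2 (by decide)]
  | succ k ih =>
    have e : k + 1 + (k + 1) = (k + k) + 1 + 1 := by ring
    have a1 : (0 : ZMod 3) - 1 = 2 := by decide
    have a2 : (0 : ZMod 3) - 2 = 1 := by decide
    have a3 : (1 : ZMod 3) - 1 = 0 := by decide
    have a4 : (1 : ZMod 3) - 2 = 2 := by decide
    have a5 : (2 : ZMod 3) - 1 = 1 := by decide
    have a6 : (2 : ZMod 3) - 2 = 0 := by decide
    rw [e]
    simp only [seq_rec, a1, a2, a3, a4, a5, a6, pow_succ]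
    omega

/-- For even `n ≥ 1`, the number of sequences `x : Fin n → ZMod 3` with all values
in `{1, 2}` and total sum `0` equals `(2 ^ n + 2) / 3`; equivalently, three times
this number equals `2 ^ n + 2`. -/
theorem card_nonzero_seq_sum_zero_even (n : ℕ) (hn : 1 ≤ n) (hpar : Even n) :
    3 * Nat.card {x : Fin n → ZMod 3 //
      (∀ i, x i = 1 ∨ x i = 2) ∧ ∑ i, x i = 0} = 2 ^ n + 2 := by
  obtain ⟨k, rfl⟩ := hpar
  exact (seq_main k).1
end

section
/- Let n ≥ 3 be an even natural number. The number of functions σ : (ZMod n) × Bool → ZMod 3, with all values in {1, 2} ⊆ ZMod 3, satisfying σ(i,false) + σ(i,true) + σ(i+1,true) + σ(i+1,false) = 0 for every i ∈ ZMod n, together with Σ_{i} σ(i,false) = 0 and Σ_{i} σ(i,true) = 0, equals (2^n + 2)/3 + 2. -/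
def hwE (b : Bool) : ZMod 3 := if b then 1 else 2

def hwA {n : ℕ} (h : 2 ∣ n) (i : ZMod n) : ZMod 3 :=
  if ZMod.castHom h (ZMod 2) i = 0 then 1 else 2

lemma hwA_zero {n : ℕ} (h : 2 ∣ n) : hwA h 0 = 1 := by simp [hwA]

lemma hwA_succ {n : ℕ} (h : 2 ∣ n) (i : ZMod n) : hwA h (i + 1) = - hwA h i := by
  unfold hwA
  rw [map_add, map_one]
  generalize (ZMod.castHom h (ZMod 2)) i = x
  revert x; decide

lemma hwA_val {n : ℕ} (h : 2 ∣ n) (i : ZMod n) : hwA h i = 1 ∨ hwA h i = 2 := by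
  unfold hwA; split_ifs <;> simp

lemma hwA_sum {n : ℕ} [NeZero n] (h : 2 ∣ n) : ∑ i : ZMod n, hwA h i = 0 := by
  have h1 : ∑ i : ZMod n, hwA h (i + 1) = ∑ i : ZMod n, hwA h i :=
    Equiv.sum_comp (Equiv.addRight (1 : ZMod n)) (hwA h)
  simp only [hwA_succ, Finset.sum_neg_distrib] at h1
  generalize ∑ i : ZMod n, hwA h i = S at h1
  revert S; decide

lemma hwA_unique {n : ℕ} [NeZero n] (h : 2 ∣ n) (s : ZMod n → ZMod 3)
    (hs : ∀ i, s (i + 1) = - s i) (i : ZMod n) : s i = s 0 * hwA h i := by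
  have key : ∀ k : ℕ, s (k : ZMod n) = s 0 * hwA h (k : ZMod n) := by
    intro k
    induction k with
    | zero => simp [hwA_zero]
    | succ k ih => push_cast; rw [hs, hwA_succ, ih, mul_neg]
  have := key i.val
  rwa [ZMod.natCast_zmod_val] at this

def hwG (k : ℕ) (c : ZMod 3) : ℤ :=
  ∑ f : Fin k → Bool, if ∑ i, hwE (f i) = c then 1 else 0

lemma hwG_succ (k : ℕ) (c : ZMod 3) : hwG (k + 1) c = hwG k (c - 1) + hwG k (c - 2) := by
  unfold hwG
  rw [← Equiv.sum_comp (Fin.consEquiv (fun _ => Bool)), Fintype.sum_prod_type, Fintype.sum_bool]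
  simp [Fin.consEquiv, Fin.sum_univ_succ, hwE, eq_sub_iff_add_eq, add_comm]

lemma hwG_val (k : ℕ) : 3 * hwG k 0 = 2 ^ k + 2 * (-1) ^ k ∧ 3 * hwG k 1 = 2 ^ k - (-1) ^ k ∧
    3 * hwG k 2 = 2 ^ k - (-1) ^ k := by
  induction k with
  | zero =>
    have : (0 : ZMod 3) ≠ 2 := by decide
    simp [hwG, this]
  | succ k ih =>
    obtain ⟨h0, h1, h2⟩ := ih
    rw [hwG_succ, hwG_succ, hwG_succ]
    rw [show (0 : ZMod 3) - 1 = 2 by decide, show (0 : ZMod 3) - 2 = 1 by decide,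
      show (1 : ZMod 3) - 1 = 0 by decide, show (1 : ZMod 3) - 2 = 2 by decide,
      show (2 : ZMod 3) - 1 = 1 by decide, show (2 : ZMod 3) - 2 = 0 by decide]
    simp only [pow_succ]
    refine ⟨?_, ?_, ?_⟩ <;> linarith

lemma hw_count (n : ℕ) [NeZero n] (hpar : Even n) :
    Nat.card {f : ZMod n → Bool // ∑ i, hwE (f i) = 0} = (2 ^ n + 2) / 3 := by
  let e : ZMod n ≃ Fin n := Fintype.equivFinOfCardEq (ZMod.card n)
  have h1 : Nat.card {f : ZMod n → Bool // ∑ i, hwE (f i) = 0} =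
      Nat.card {f : Fin n → Bool // ∑ i, hwE (f i) = 0} := by
    refine Nat.card_congr (Equiv.subtypeEquiv (Equiv.arrowCongr e (Equiv.refl Bool)) ?_)
    intro f
    have := Equiv.sum_comp e.symm (fun i => hwE (f i))
    simp [Equiv.arrowCongr, this]
  have h2 : ((Nat.card {f : Fin n → Bool // ∑ i, hwE (f i) = 0} : ℕ) : ℤ) = hwG n 0 := by
    rw [Nat.card_eq_fintype_card, Fintype.card_subtype, Finset.card_filter]
    simp [hwG]
  have h3 := (hwG_val n).1
  rw [hpar.neg_one_pow] at h3
  rw [h1]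
  have : 3 * Nat.card {f : Fin n → Bool // ∑ i, hwE (f i) = 0} = 2 ^ n + 2 := by
    zify; rw [h2]; linarith
  omega

lemma hwE_val (b : Bool) : hwE b = 1 ∨ hwE b = 2 := by revert b; decide

lemma hwE_inj {a b : Bool} (h : hwE a = hwE b) : a = b := by revert a b; decide

lemma hwE_surj (x : ZMod 3) (h : x = 1 ∨ x = 2) : hwE (decide (x = 1)) = x := by
  revert x; decide

/-- For even `n ≥ 3`, the number of Heawood vectors of the circular ladder graph `CL_n`,
i.e. functions `σ : (ZMod n) × Bool → ZMod 3` with all values in `{1, 2}` satisfying the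
propriety condition for each quadrilateral face and for the two `n`-gonal faces,
equals `(2 ^ n + 2) / 3 + 2`. -/
theorem card_heawood_circularLadder_even (n : ℕ) [NeZero n] (hn : 3 ≤ n) (hpar : Even n) :
    Nat.card {σ : ZMod n × Bool → ZMod 3 //
      (∀ v, σ v = 1 ∨ σ v = 2) ∧
      (∀ i : ZMod n,
        σ (i, false) + σ (i, true) + σ (i + 1, true) + σ (i + 1, false) = 0) ∧
      (∑ i : ZMod n, σ (i, false)) = 0 ∧ (∑ i : ZMod n, σ (i, true)) = 0} =
    (2 ^ n + 2) / 3 + 2 := by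
  have h : 2 ∣ n := hpar.two_dvd
  rw [← hw_count n hpar, show 2 = Nat.card Bool by simp, ← Nat.card_sum]
  symm
  refine Nat.card_eq_of_bijective (fun x => match x with
    | Sum.inl f => ⟨fun v => if v.2 then - hwE (f.1 v.1) else hwE (f.1 v.1), ?_, ?_, ?_, ?_⟩
    | Sum.inr c => ⟨fun v => hwE c * hwA h v.1, ?_, ?_, ?_, ?_⟩) ⟨?_, ?_⟩
  · rintro ⟨i, b⟩
    dsimp only
    generalize f.1 i = x
    cases b <;> simp only [Bool.false_eq_true, if_true, if_false] <;> revert x <;> decide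
  · intro i
    simp
  · simpa using f.2
  · simpa using f.2
  · rintro ⟨i, b⟩
    rcases hwA_val h i with h1 | h1 <;> simp only [h1] <;> revert c <;> decide
  · intro i
    simp only [hwA_succ]; ring
  · simp only [← Finset.mul_sum, hwA_sum, mul_zero]
  · simp only [← Finset.mul_sum, hwA_sum, mul_zero]
  · have key : ∀ a c : Bool, hwE a = hwE c → - hwE a = hwE c → False := by decide
    rintro (f | c) (g | d) hfg
    · congr 1
      apply Subtype.ext
      funext i
      have := congrFun (congrArg Subtype.val hfg) (i, false)
      exact hwE_inj (by simpa using this)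
    · exfalso
      have h1 := congrFun (congrArg Subtype.val hfg) (0, false)
      have h2 := congrFun (congrArg Subtype.val hfg) (0, true)
      simp only [hwA_zero] at h1 h2
      exact key (f.1 0) d (by simpa using h1) (by simpa using h2)
    · exfalso
      have h1 := congrFun (congrArg Subtype.val hfg) (0, false)
      have h2 := congrFun (congrArg Subtype.val hfg) (0, true)
      simp only [hwA_zero] at h1 h2
      exact key (g.1 0) c (by simpa using h1.symm) (by simpa using h2.symm)
    · congr 1
      have h1 := congrFun (congrArg Subtype.val hfg) (0, false)
      simp only [hwA_zero] at h1
      exact hwE_inj (by simpa using h1)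
  · rintro ⟨σ, hv, hq, hf, ht⟩
    have hs := hwA_unique h (fun i => σ (i, false) + σ (i, true))
      (fun i => by have := hq i; linear_combination this)
    by_cases h0 : σ (0, false) + σ (0, true) = 0
    · refine ⟨Sum.inl ⟨fun i => decide (σ (i, false) = 1), ?_⟩, ?_⟩
      · simpa only [hwE_surj _ (hv _)] using hf
      · apply Subtype.ext
        funext ⟨i, b⟩
        simp only [hwE_surj _ (hv _)]
        have := hs i
        rw [h0, zero_mul] at this
        cases b
        · simp
        · simp only [if_true]; linear_combination -this
    · refine ⟨Sum.inr (decide (σ (0, false) = 1)), ?_⟩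
      apply Subtype.ext
      funext ⟨i, b⟩
      simp only [hwE_surj _ (hv _)]
      have key : ∀ x y a p q : ZMod 3, (x = 1 ∨ x = 2) → (y = 1 ∨ y = 2) → (a = 1 ∨ a = 2) →
        (p = 1 ∨ p = 2) → (q = 1 ∨ q = 2) → x + y ≠ 0 → p + q = (x + y) * a →
        x * a = p ∧ x * a = q := by
        rintro _ _ _ _ _ (rfl | rfl) (rfl | rfl) (rfl | rfl) (rfl | rfl) (rfl | rfl) <;> decide
      have := key _ _ _ _ _ (hv (0, false)) (hv (0, true)) (hwA_val h i) (hv (i, false))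
        (hv (i, true)) h0 (hs i)
      cases b
      · exact this.1
      · exact this.2
end

section
/- Let n ≥ 3. The number of proper 3-edge-colorings of the circular ladder graph CL_n equals 3 times the number of functions σ : (ZMod n) × Bool → ZMod 3 with all values in {1, 2} ⊆ ZMod 3 satisfying σ(i,false) + σ(i,true) + σ(i+1,true) + σ(i+1,false) = 0 for every i ∈ ZMod n, Σ_{i} σ(i,false) = 0, and Σ_{i} σ(i,true) = 0 (the Heawood correspondence for CL_n). -/
theorem cl_two_ne (n : ℕ) (hn : 3 ≤ n) : (1 : ZMod n) + 1 ≠ 0 ∧ (1 : ZMod n) ≠ 0 := by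
  constructor
  · intro h
    have h2 : ((2 : ℕ) : ZMod n) = 0 := by push_cast; rw [← h]; norm_num
    rw [ZMod.natCast_eq_zero_iff] at h2
    have := Nat.le_of_dvd (by norm_num) h2
    omega
  · intro h
    have h2 : ((1 : ℕ) : ZMod n) = 0 := by push_cast; exact h
    rw [ZMod.natCast_eq_zero_iff] at h2
    have := Nat.le_of_dvd (by norm_num) h2
    omega

theorem cl_induct (n : ℕ) [NeZero n] (p : ZMod n → Prop) (h0 : p 0)
    (hs : ∀ i, p i → p (i + 1)) (i : ZMod n) : p i := by
  have key : ∀ k : ℕ, p (k : ZMod n) := by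
    intro k
    induction k with
    | zero => simpa using h0
    | succ k ih => push_cast; exact hs _ ih
  have := key i.val
  rwa [ZMod.natCast_zmod_val] at this

theorem cl_integrate (n : ℕ) [NeZero n] (f : ZMod n → ZMod 3) (hf : ∑ i, f i = 0)
    (x : ZMod 3) : ∃ g : ZMod n → ZMod 3, g 0 = x ∧ ∀ i, g (i + 1) = g i + f (i + 1) := by
  refine ⟨fun i => x + ∑ k ∈ Finset.range i.val, f ((k : ZMod n) + 1), by simp, ?_⟩
  intro i
  have hlt := ZMod.val_lt i
  have hsum : ∑ k ∈ Finset.range n, f ((k : ZMod n) + 1) = 0 := by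
    rw [← hf, ← Equiv.sum_comp (Equiv.addRight (1 : ZMod n)) f]
    refine Finset.sum_bij (fun k _ => (k : ZMod n)) (by simp) ?_ ?_ (by simp)
    · intro a ha b hb h
      have := congrArg ZMod.val h
      simp only [Finset.mem_range] at ha hb
      simpa [ZMod.val_natCast_of_lt ha, ZMod.val_natCast_of_lt hb] using this
    · intro b _
      exact ⟨b.val, by simpa using ZMod.val_lt b, by simp⟩
  have hi : ((i.val : ℕ) : ZMod n) = i := ZMod.natCast_zmod_val i
  have hs := Finset.sum_range_succ (fun k : ℕ => f ((k : ZMod n) + 1)) i.val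
  simp only [hi] at hs
  have hv : i + 1 = ((i.val + 1 : ℕ) : ZMod n) := by push_cast; rw [hi]
  rcases Nat.lt_or_ge (i.val + 1) n with h | h
  · have : (i + 1).val = i.val + 1 := by rw [hv, ZMod.val_natCast_of_lt h]
    simp only [this, hs]; ring
  · have hn : i.val + 1 = n := by omega
    have h0 : (i + 1) = 0 := by rw [hv, hn]; simp
    rw [hn, hsum] at hs
    have h0v : (i + 1).val = 0 := by rw [h0]; simp
    simp only [h0v, Finset.range_zero, Finset.sum_empty]
    rw [add_assoc, ← hs]

/-- edges of the ladder -/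
def clEdge (n : ℕ) : Option Bool × ZMod n → Sym2 (ZMod n × Bool)
  | (some b, i) => s((i, b), (i + 1, b))
  | (none, i) => s((i, false), (i, true))

theorem clEdge_mem (n : ℕ) (hn : 3 ≤ n) (x : Option Bool × ZMod n) :
    clEdge n x ∈ (circularLadder n).edgeSet := by
  obtain ⟨h2, h1⟩ := cl_two_ne n hn
  rcases x with ⟨_ | b, i⟩ <;> simp [clEdge, circularLadder, h1]

theorem clEdge_inj (n : ℕ) (hn : 3 ≤ n) : Function.Injective (clEdge n) := by
  obtain ⟨h2, h1⟩ := cl_two_ne n hn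
  rintro ⟨_ | b, i⟩ ⟨_ | c, j⟩ h
  · simp [clEdge] at h; simp [h]
  · simp [clEdge] at h
    grind
  · simp [clEdge] at h
    grind
  · simp only [clEdge, Sym2.eq_iff, Prod.mk.injEq] at h
    rcases h with ⟨⟨rfl, rfl⟩, _⟩ | ⟨⟨h3, rfl⟩, h4, _⟩
    · rfl
    · exfalso; apply h2
      rw [h3] at h4
      have : j + (1 + 1) = j + 0 := by rw [← add_assoc, h4, add_zero]
      exact add_left_cancel this

theorem clEdge_surj (n : ℕ) (e : Sym2 (ZMod n × Bool))
    (he : e ∈ (circularLadder n).edgeSet) : ∃ x, clEdge n x = e := by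
  induction e using Sym2.ind with
  | _ p q =>
  obtain ⟨i, b⟩ := p
  obtain ⟨j, c⟩ := q
  simp only [circularLadder, SimpleGraph.mem_edgeSet, SimpleGraph.fromRel_adj] at he
  have h : (b = c ∧ (j = i + 1 ∨ i = j + 1)) ∨ (b ≠ c ∧ i = j) := by
    rcases he with ⟨_, h | h⟩
    · exact h
    · rcases h with ⟨h, h'⟩ | ⟨h, h'⟩
      · exact Or.inl ⟨h.symm, h'.symm⟩
      · exact Or.inr ⟨fun x => h x.symm, h'.symm⟩
  rcases h with ⟨rfl, rfl | rfl⟩ | ⟨h, rfl⟩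
  · exact ⟨(some b, i), rfl⟩
  · exact ⟨(some b, j), Sym2.eq_swap⟩
  · refine ⟨(none, i), ?_⟩
    cases b <;> cases c <;> simp [clEdge] at h ⊢

noncomputable def clEquiv (n : ℕ) (hn : 3 ≤ n) :
    Option Bool × ZMod n ≃ (circularLadder n).edgeSet :=
  Equiv.ofBijective (fun x => ⟨clEdge n x, clEdge_mem n hn x⟩)
    ⟨fun x y h => clEdge_inj n hn (congrArg Subtype.val h),
     fun e => by
      obtain ⟨x, hx⟩ := clEdge_surj n e.1 e.2
      exact ⟨x, Subtype.ext hx⟩⟩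

/-- local propriety -/
def clProper (n : ℕ) (c : Option Bool × ZMod n → ZMod 3) : Prop :=
  ∀ b i, c (some b, i) ≠ c (some b, i + 1) ∧ c (some b, i) ≠ c (none, i) ∧
    c (some b, i) ≠ c (none, i + 1)

theorem clProper_iff (n : ℕ) (hn : 3 ≤ n) (C : (circularLadder n).edgeSet → ZMod 3) :
    IsTaitColoring (circularLadder n) C ↔ clProper n (fun x => C (clEquiv n hn x)) := by
  obtain ⟨h2, h1⟩ := cl_two_ne n hn
  constructor
  · intro h b i
    refine ⟨h _ _ ?_ ⟨(i + 1, b), ?_, ?_⟩, h _ _ ?_ ⟨(i, b), ?_, ?_⟩,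
      h _ _ ?_ ⟨(i + 1, b), ?_, ?_⟩⟩
    · intro h; simpa [h1] using (clEquiv n hn).injective h
    · simp [clEquiv, clEdge]
    · simp [clEquiv, clEdge]
    · intro h; simpa using (clEquiv n hn).injective h
    · simp [clEquiv, clEdge]
    · cases b <;> simp [clEquiv, clEdge]
    · intro h; simpa using (clEquiv n hn).injective h
    · simp [clEquiv, clEdge]
    · cases b <;> simp [clEquiv, clEdge]
  · intro h e₁ e₂ hne hv
    obtain ⟨x, rfl⟩ := (clEquiv n hn).surjective e₁
    obtain ⟨y, rfl⟩ := (clEquiv n hn).surjective e₂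
    have hxy : x ≠ y := fun h => hne (by rw [h])
    obtain ⟨⟨j, d⟩, hx, hy⟩ := hv
    rcases x with ⟨_ | b, i⟩ <;> rcases y with ⟨_ | c, k⟩
    · simp [clEquiv, clEdge] at hx hy
      grind
    · simp [clEquiv, clEdge] at hx hy
      have h3 := h c k
      have : i = k ∨ i = k + 1 := by grind
      rcases this with rfl | rfl
      · exact h3.2.1.symm
      · exact h3.2.2.symm
    · simp [clEquiv, clEdge] at hx hy
      have h3 := h b i
      have : k = i ∨ k = i + 1 := by grind
      rcases this with rfl | rfl
      · exact h3.2.1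
      · exact h3.2.2
    · simp [clEquiv, clEdge] at hx hy
      have hbc : b = c := by grind
      subst hbc
      have : i = k + 1 ∨ k = i + 1 := by grind
      rcases this with rfl | rfl
      · exact (h b k).1.symm
      · exact (h b i).1

theorem z3_a : ∀ x y z : ZMod 3, x ≠ y → x ≠ z → y ≠ z → z = - x - y := by decide

theorem z3_b : ∀ x y : ZMod 3, x ≠ y → (y - x = 1 ∨ y - x = 2) := by decide

theorem z3_c : ∀ x s : ZMod 3, (s = 1 ∨ s = 2) → x ≠ x + s ∧ x ≠ x - s ∧ x + s ≠ x - s := by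
  decide

theorem z3_d : ∀ x : ZMod 3, 3 * x = 0 := by decide

/-- Heawood vectors -/
def clHea (n : ℕ) [NeZero n] (σ : ZMod n × Bool → ZMod 3) : Prop :=
  (∀ v, σ v = 1 ∨ σ v = 2) ∧
      (∀ i : ZMod n,
        σ (i, false) + σ (i, true) + σ (i + 1, true) + σ (i + 1, false) = 0) ∧
      (∑ i : ZMod n, σ (i, false)) = 0 ∧ (∑ i : ZMod n, σ (i, true)) = 0

def clSig (n : ℕ) (c : Option Bool × ZMod n → ZMod 3) : ZMod n × Bool → ZMod 3
  | (i, false) => c (some false, i) - c (some false, i - 1)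
  | (i, true) => c (some true, i - 1) - c (some true, i)

theorem clProper_rung (n : ℕ) (c : Option Bool × ZMod n → ZMod 3) (hc : clProper n c)
    (b : Bool) (i : ZMod n) : c (none, i) = - c (some b, i - 1) - c (some b, i) := by
  have h1 := hc b (i - 1)
  have h2 := hc b i
  rw [sub_add_cancel] at h1
  exact z3_a _ _ _ h1.1 h1.2.2 h2.2.1

theorem clSig_hea (n : ℕ) [NeZero n] (c : Option Bool × ZMod n → ZMod 3)
    (hc : clProper n c) : clHea n (clSig n c) := by
  refine ⟨?_, ?_, ?_, ?_⟩
  · rintro ⟨i, b⟩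
    have h1 := (hc b (i - 1)).1
    rw [sub_add_cancel] at h1
    cases b
    · exact z3_b _ _ h1
    · exact z3_b _ _ h1.symm
  · intro i
    simp only [clSig, add_sub_cancel_right]
    have e1 := (clProper_rung n c hc false i).symm.trans (clProper_rung n c hc true i)
    have e2 := (clProper_rung n c hc false (i + 1)).symm.trans (clProper_rung n c hc true (i + 1))
    rw [add_sub_cancel_right] at e2
    linear_combination e1 - e2
  · simp only [clSig, Finset.sum_sub_distrib]
    rw [sub_eq_zero]
    exact (Equiv.sum_comp (Equiv.subRight (1 : ZMod n)) (fun i => c (some false, i))).symm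
  · simp only [clSig, Finset.sum_sub_distrib]
    rw [sub_eq_zero]
    exact (Equiv.sum_comp (Equiv.subRight (1 : ZMod n)) (fun i => c (some true, i)))

def clMap (n : ℕ) [NeZero n] (c : {c // clProper n c}) : ZMod 3 × {σ // clHea n σ} :=
  (c.1 (some false, 0), ⟨clSig n c.1, clSig_hea n c.1 c.2⟩)

theorem cl_true_eq (n : ℕ) (c : Option Bool × ZMod n → ZMod 3) (hc : clProper n c)
    (i : ZMod n) : c (some true, i) =
      c (some false, i) + clSig n c (i, false) + clSig n c (i, true) := by
  have e1 := (clProper_rung n c hc false i).symm.trans (clProper_rung n c hc true i)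
  have h3 : (3 : ZMod 3) = 0 := by decide
  simp only [clSig]
  linear_combination -e1 + (c (some true, i) - c (some false, i)) * h3

theorem clMap_bij (n : ℕ) [NeZero n] : Function.Bijective (clMap n) := by
  constructor
  · rintro ⟨c, hc⟩ ⟨c', hc'⟩ h
    simp only [clMap, Prod.mk.injEq, Subtype.mk.injEq] at h
    obtain ⟨h0, hs⟩ := h
    have hf : ∀ i, c (some false, i) = c' (some false, i) := by
      refine cl_induct n _ h0 ?_
      intro i ih
      have := congrFun hs (i + 1, false)
      simp only [clSig, add_sub_cancel_right] at this
      rw [ih] at this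
      exact sub_left_injective this
    have ht : ∀ i, c (some true, i) = c' (some true, i) := by
      intro i
      rw [cl_true_eq n c hc, cl_true_eq n c' hc', hs, hf]
    apply Subtype.ext
    funext ⟨o, i⟩
    rcases o with _ | _ | _
    · simp only [clProper_rung n c hc false, clProper_rung n c' hc' false, hf]
    · exact hf i
    · exact ht i
  · rintro ⟨x, σ, h12, hq, hf, ht⟩
    obtain ⟨g, hg0, hg⟩ : ∃ g : ZMod n → ZMod 3, g 0 = x ∧
        ∀ i, g (i + 1) = g i + σ (i + 1, false) := cl_integrate n (fun i => σ (i, false)) hf x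
    have h3 : (3 : ZMod 3) = 0 := by decide
    let c : Option Bool × ZMod n → ZMod 3 := fun y => match y with
      | (some false, i) => g i
      | (some true, i) => g i + σ (i, false) + σ (i, true)
      | (none, i) => g i + σ (i, false)
    have hb : ∀ i, c (some true, i + 1) = c (some true, i) - σ (i + 1, true) := by
      intro i
      simp only [c]
      linear_combination hg i - hq i + (σ (i + 1, false) + σ (i + 1, true)) * h3
    have hc : clProper n c := by
      rintro b i
      cases b
      · have := z3_c (g i) _ (h12 (i + 1, false))
        have h5 := z3_c (g i) _ (h12 (i, false))
        refine ⟨?_, ?_, ?_⟩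
        · simp only [c, hg]; exact this.1
        · simp only [c]; exact h5.1
        · simp only [c, hg]
          convert this.2.1 using 1
          linear_combination σ (i + 1, false) * h3
      · have := z3_c (c (some true, i)) _ (h12 (i + 1, true))
        have h5 := z3_c (c (some true, i)) _ (h12 (i, true))
        refine ⟨?_, ?_, ?_⟩
        · rw [hb]; exact this.2.1
        · convert h5.2.1 using 1
          simp only [c]; ring
        · convert this.1 using 1
          have := hb i
          simp only [c] at this ⊢
          linear_combination this - σ (i + 1, true) * h3
    refine ⟨⟨c, hc⟩, ?_⟩
    refine Prod.ext hg0 (Subtype.ext ?_)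
    change clSig n c = σ
    funext ⟨i, b⟩
    cases b
    · have := hg (i - 1)
      rw [sub_add_cancel] at this
      simp only [clSig, c]
      rw [this]; ring
    · have := hb (i - 1)
      rw [sub_add_cancel] at this
      simp only [clSig]
      rw [this]; ring

/-- The Heawood correspondence for `CL_n` (`n ≥ 3`): the number of proper
3-edge-colorings of the circular ladder graph equals three times the number of
its Heawood vectors, i.e. functions `σ : (ZMod n) × Bool → ZMod 3` with all values
in `{1, 2}` satisfying the propriety conditions of all faces. -/
theorem numTaitColorings_eq_three_mul_card_heawood (n : ℕ) [NeZero n] (hn : 3 ≤ n) :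
    numTaitColorings (circularLadder n) =
    3 * Nat.card {σ : ZMod n × Bool → ZMod 3 //
      (∀ v, σ v = 1 ∨ σ v = 2) ∧
      (∀ i : ZMod n,
        σ (i, false) + σ (i, true) + σ (i + 1, true) + σ (i + 1, false) = 0) ∧
      (∑ i : ZMod n, σ (i, false)) = 0 ∧ (∑ i : ZMod n, σ (i, true)) = 0} := by
  unfold numTaitColorings
  have e1 : {C : (circularLadder n).edgeSet → ZMod 3 // IsTaitColoring (circularLadder n) C} ≃
      {c // clProper n c} :=
    Equiv.subtypeEquiv (Equiv.arrowCongr (clEquiv n hn).symm (Equiv.refl _))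
      (fun C => clProper_iff n hn C)
  rw [Nat.card_congr e1, Nat.card_congr (Equiv.ofBijective _ (clMap_bij n)), Nat.card_prod]
  simp only [Nat.card_zmod]
  rfl
end

section
/- Let n ≥ 3 be odd and let σ : (ZMod n) × Bool → ZMod 3 have all values in {1, 2} ⊆ ZMod 3 and satisfy σ(i,false) + σ(i,true) + σ(i+1,true) + σ(i+1,false) = 0 for every i ∈ ZMod n. Then σ(i,true) = −σ(i,false) for every i ∈ ZMod n; in particular there is no index i with σ(i,false) = σ(i,true). -/
/-- For odd `n ≥ 3`, any function `σ : (ZMod n) × Bool → ZMod 3` with all values in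
`{1, 2}` that satisfies the propriety conditions of the quadrilateral faces of `CL_n`
must satisfy `σ (i, true) = -σ (i, false)` for every `i`; in particular there is no
index `i` with `σ (i, false) = σ (i, true)`. -/
theorem heawood_quad_odd_antisym (n : ℕ) (hn : 3 ≤ n) (hpar : Odd n)
    (σ : ZMod n × Bool → ZMod 3)
    (hval : ∀ v, σ v = 1 ∨ σ v = 2)
    (hface : ∀ i : ZMod n,
      σ (i, false) + σ (i, true) + σ (i + 1, true) + σ (i + 1, false) = 0) :
    (∀ i : ZMod n, σ (i, true) = -σ (i, false)) ∧
    ¬ ∃ i : ZMod n, σ (i, false) = σ (i, true) := by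
  have key : ∀ (i : ZMod n) (k : ℕ), σ (i + k, true) + σ (i + k, false)
      = (-1) ^ k * (σ (i, true) + σ (i, false)) := by
    intro i k
    induction k with
    | zero => simp
    | succ k ih =>
      have h := hface (i + k)
      have e : i + ((k + 1 : ℕ) : ZMod n) = i + k + 1 := by push_cast; ring
      rw [e, pow_succ]
      linear_combination h - ih
  have dbl : ∀ x : ZMod 3, x = -x → x = 0 := by decide
  have anti : ∀ i : ZMod n, σ (i, true) = -σ (i, false) := by
    intro i
    have h := key i n
    rw [ZMod.natCast_self, add_zero, hpar.neg_one_pow, neg_one_mul] at h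
    exact eq_neg_of_add_eq_zero_left (dbl _ h)
  refine ⟨anti, ?_⟩
  rintro ⟨i, hi⟩
  have h := anti i
  rw [← hi] at h
  have h0 := dbl _ h
  rcases hval (i, false) with h1 | h1 <;> rw [h1] at h0 <;> revert h0 <;> decide
end
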